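/- arXiv:2110.02088 — 2 statements merged into one kernel-verified Lean document; each statement's English description precedes it below -/
import Mathlib

section
/- Let (x_i) be a sequence in ℝ^n converging to ξ, let p ≥ 1, and suppose there are constants 0 < k ≤ K and an index m such that for all i ≥ m: x_{i+1} ≠ x_i, the points x_i lie in the ball B(ξ; 1/2), and k‖x_{i+1} − x_i‖^p ≤ ‖x_{i+2} − x_{i+1}‖ ≤ K‖x_{i+1} − x_i‖^p. Then there exists δ_K > 0 such that the sequence of values P_i := log(‖x_i − x_{i−1}‖)/log(‖x_{i−1} − x_{i−2}‖) satisfies |P_i − p| ≤ δ_K for all i ≥ m + 2. -/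
open Filter Topology

/-- If `(x_i)` converges to `ξ`, `p ≥ 1`, and there are `0 < k ≤ K` and an index
`m` such that for all `i ≥ m` we have `x_{i+1} ≠ x_i`, `x_i ∈ B(ξ; 1/2)` and
`k‖x_{i+1} − x_i‖^p ≤ ‖x_{i+2} − x_{i+1}‖ ≤ K‖x_{i+1} − x_i‖^p`, then there is `δ_K > 0`
such that `P_i := log(‖x_i − x_{i−1}‖)/log(‖x_{i−1} − x_{i−2}‖)` satisfies
`|P_i − p| ≤ δ_K` for all `i ≥ m + 2`. -/
theorem order_estimates_in_ball_of_two_sided_bound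
    {n : ℕ} (x : ℕ → EuclideanSpace ℝ (Fin n)) (ξ : EuclideanSpace ℝ (Fin n))
    (hlim : Tendsto x atTop (𝓝 ξ))
    (p : ℝ) (hp : 1 ≤ p) (k K : ℝ) (hk : 0 < k) (hkK : k ≤ K) (m : ℕ)
    (hne : ∀ i : ℕ, m ≤ i → x (i + 1) ≠ x i)
    (hball : ∀ i : ℕ, m ≤ i → x i ∈ Metric.ball ξ (1 / 2))
    (hlower : ∀ i : ℕ, m ≤ i → k * ‖x (i + 1) - x i‖ ^ p ≤ ‖x (i + 2) - x (i + 1)‖)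
    (hupper : ∀ i : ℕ, m ≤ i → ‖x (i + 2) - x (i + 1)‖ ≤ K * ‖x (i + 1) - x i‖ ^ p) :
    ∃ δK : ℝ, 0 < δK ∧ ∀ i : ℕ, m + 2 ≤ i →
      |Real.log ‖x i - x (i - 1)‖ / Real.log ‖x (i - 1) - x (i - 2)‖ - p| ≤ δK := by
  have hd : Tendsto (fun j => ‖x (j + 1) - x j‖) atTop (𝓝 0) := by
    have h := ((hlim.comp (tendsto_add_atTop_nat 1)).sub hlim).norm
    simpa using h
  have hev : ∀ᶠ j in atTop, ‖x (j + 1) - x j‖ < Real.exp (-1) :=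
    hd.eventually_lt_const (Real.exp_pos _)
  have hK : 0 < K := lt_of_lt_of_le hk hkK
  have hbd : IsBoundedUnder (· ≤ ·) atTop (fun j =>
      |Real.log ‖x (j + 2) - x (j + 1)‖ / Real.log ‖x (j + 1) - x j‖ - p|) := by
    refine ⟨|Real.log k| + |Real.log K|, ?_⟩
    rw [eventually_map]
    filter_upwards [hev, eventually_ge_atTop m] with j hj hm
    have hpos : 0 < ‖x (j + 1) - x j‖ := norm_pos_iff.2 (sub_ne_zero.2 (hne j hm))
    have hpos' : 0 < ‖x (j + 2) - x (j + 1)‖ :=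
      norm_pos_iff.2 (sub_ne_zero.2 (hne (j + 1) (by omega)))
    have hlo := hlower j hm
    have hup := hupper j hm
    generalize ‖x (j + 1) - x j‖ = a at *
    generalize ‖x (j + 2) - x (j + 1)‖ = b at *
    have hap : 0 < a ^ p := Real.rpow_pos_of_pos hpos p
    have h1 := Real.log_le_log (mul_pos hk hap) hlo
    have h2 := Real.log_le_log hpos' hup
    rw [Real.log_mul hk.ne' hap.ne', Real.log_rpow hpos] at h1
    rw [Real.log_mul hK.ne' hap.ne', Real.log_rpow hpos] at h2
    have h3 : Real.log a < -1 := (Real.log_lt_iff_lt_exp hpos).2 hj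
    have h4 : Real.log a ≠ 0 := by linarith
    have h5 : Real.log b / Real.log a - p = (Real.log b - p * Real.log a) / Real.log a := by
      field_simp
    have h6 : 1 ≤ |Real.log a| := by
      rw [abs_of_neg (by linarith)]
      linarith
    rw [h5, abs_div]
    refine (div_le_self (abs_nonneg _) h6).trans ?_
    rw [abs_le]
    constructor
    · linarith [neg_abs_le (Real.log k), abs_nonneg (Real.log K)]
    · linarith [le_abs_self (Real.log K), abs_nonneg (Real.log k)]
  obtain ⟨C, hC⟩ := hbd.bddAbove_range
  refine ⟨max C 1, lt_max_of_lt_right one_pos, fun i hi => ?_⟩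
  obtain ⟨j, rfl⟩ : ∃ j, i = j + 2 := ⟨i - 2, by omega⟩
  exact (hC ⟨j, rfl⟩).trans (le_max_left _ _)
end

section
/- Let (x_i) be a sequence in ℝ^n converging to ξ, let p ≥ 1, and suppose there are constants 0 < k ≤ K and an index m such that for all i ≥ m: x_{i+1} ≠ x_i, ‖x_{i+1} − x_i‖ < 1, and k‖x_{i+1} − x_i‖^p ≤ ‖x_{i+2} − x_{i+1}‖ ≤ K‖x_{i+1} − x_i‖^p. If in addition ‖x_{i+1} − x_i‖ → 0 as i → ∞, then the sequence P_i := log(‖x_i − x_{i−1}‖)/log(‖x_{i−1} − x_{i−2}‖) converges to p; in particular, for every ε > 0 there exists an index j ≥ m + 2 with |P_j − p| ≤ ε. -/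
open Filter Topology

/-- If `(x_i)` converges to `ξ`, `p ≥ 1`, and there are `0 < k ≤ K` and an index
`m` such that for all `i ≥ m` we have `x_{i+1} ≠ x_i`, `‖x_{i+1} − x_i‖ < 1` and
`k‖x_{i+1} − x_i‖^p ≤ ‖x_{i+2} − x_{i+1}‖ ≤ K‖x_{i+1} − x_i‖^p`, and moreover
`‖x_{i+1} − x_i‖ → 0`, then `P_i := log(‖x_i − x_{i−1}‖)/log(‖x_{i−1} − x_{i−2}‖)`
converges to `p`; in particular, for every `ε > 0` there is `j ≥ m + 2` with `|P_j − p| ≤ ε`. -/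
theorem order_estimates_tendsto_order_of_convergence
    {n : ℕ} (x : ℕ → EuclideanSpace ℝ (Fin n)) (ξ : EuclideanSpace ℝ (Fin n))
    (hlim : Tendsto x atTop (𝓝 ξ))
    (p : ℝ) (hp : 1 ≤ p) (k K : ℝ) (hk : 0 < k) (hkK : k ≤ K) (m : ℕ)
    (hne : ∀ i : ℕ, m ≤ i → x (i + 1) ≠ x i)
    (hlt1 : ∀ i : ℕ, m ≤ i → ‖x (i + 1) - x i‖ < 1)
    (hlower : ∀ i : ℕ, m ≤ i → k * ‖x (i + 1) - x i‖ ^ p ≤ ‖x (i + 2) - x (i + 1)‖)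
    (hupper : ∀ i : ℕ, m ≤ i → ‖x (i + 2) - x (i + 1)‖ ≤ K * ‖x (i + 1) - x i‖ ^ p)
    (hdiff0 : Tendsto (fun i : ℕ => ‖x (i + 1) - x i‖) atTop (𝓝 0)) :
    Tendsto
      (fun i : ℕ => Real.log ‖x i - x (i - 1)‖ / Real.log ‖x (i - 1) - x (i - 2)‖)
      atTop (𝓝 p) ∧
    ∀ ε : ℝ, 0 < ε → ∃ j : ℕ, m + 2 ≤ j ∧
      |Real.log ‖x j - x (j - 1)‖ / Real.log ‖x (j - 1) - x (j - 2)‖ - p| ≤ ε := by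
  have hpos : ∀ i : ℕ, m ≤ i → 0 < ‖x (i + 1) - x i‖ := fun i hi =>
    norm_pos_iff.mpr (sub_ne_zero.mpr (hne i hi))
  have hK : 0 < K := lt_of_lt_of_le hk hkK
  have hL : Tendsto (fun i : ℕ => Real.log ‖x (i + 1) - x i‖) atTop atBot := by
    refine Real.tendsto_log_nhdsGT_zero.comp (tendsto_nhdsWithin_iff.mpr ⟨hdiff0, ?_⟩)
    filter_upwards [eventually_ge_atTop m] with i hi using hpos i hi
  have aux : ∀ c : ℝ, Tendsto (fun i : ℕ => c / Real.log ‖x (i + 1) - x i‖ + p) atTop (𝓝 p) := by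
    intro c
    simpa using (hL.const_div_atBot c).add_const p
  have main : Tendsto
      (fun i : ℕ => Real.log ‖x i - x (i - 1)‖ / Real.log ‖x (i - 1) - x (i - 2)‖)
      atTop (𝓝 p) := by
    rw [← tendsto_add_atTop_iff_nat 2]
    refine tendsto_of_tendsto_of_tendsto_of_le_of_le' (aux (Real.log K)) (aux (Real.log k)) ?_ ?_
    · filter_upwards [eventually_ge_atTop m] with i hi
      have h0 := hpos i hi
      have hneg := Real.log_neg h0 (hlt1 i hi)
      have h := Real.log_le_log (hpos (i + 1) (by omega)) (hupper i hi)
      rw [Real.log_mul hK.ne' (Real.rpow_pos_of_pos h0 p).ne', Real.log_rpow h0] at h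
      change _ ≤ Real.log ‖x (i + 2) - x (i + 1)‖ / Real.log ‖x (i + 1) - x i‖
      rw [le_div_iff_of_neg hneg, add_mul, div_mul_cancel₀ _ hneg.ne]
      exact h
    · filter_upwards [eventually_ge_atTop m] with i hi
      have h0 := hpos i hi
      have hneg := Real.log_neg h0 (hlt1 i hi)
      have hp0 := Real.rpow_pos_of_pos h0 p
      have h := Real.log_le_log (mul_pos hk hp0) (hlower i hi)
      rw [Real.log_mul hk.ne' hp0.ne', Real.log_rpow h0] at h
      change Real.log ‖x (i + 2) - x (i + 1)‖ / Real.log ‖x (i + 1) - x i‖ ≤ _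
      rw [div_le_iff_of_neg hneg, add_mul, div_mul_cancel₀ _ hneg.ne]
      exact h
  refine ⟨main, fun ε hε => ?_⟩
  obtain ⟨j, hj, hj2⟩ := ((eventually_ge_atTop (m + 2)).and
    (Metric.tendsto_nhds.mp main ε hε)).exists
  exact ⟨j, hj, (Real.dist_eq _ _ ▸ hj2).le⟩
end
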